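/- If μ is a Radon measure whose support is the compact set Γ ⊂ ℝⁿ, and μ is upper d-regular on Γ for some d ∈ (n−2, n], then the trace-continuity assumption holds: there is C > 0 with ‖v|_Γ‖_{L²(Γ,μ)} ≤ C‖v‖_{H¹(ℝⁿ)} for all v ∈ 𝒮(ℝⁿ), so the trace map v ↦ v|_Γ extends to a continuous linear operator H¹(ℝⁿ) → L²(Γ,μ). -/

import Mathlib

/-!
STATEMENT 8 (`thm:Bie`, after Jonsson): if `μ` is a Radon measure whose support is the
compact set `Γ ⊆ ℝⁿ` and `μ` is upper `d`-regular on `Γ` for some `d ∈ (n−2, n]`, then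
the trace-continuity inequality holds: there is `C > 0` with
`‖v|_Γ‖_{L²(Γ,μ)} ≤ C ‖v‖_{H¹(ℝⁿ)}` for all `v ∈ 𝒮(ℝⁿ)` (so that, by density of
`𝒮(ℝⁿ)` in `H¹(ℝⁿ)`, the trace map `v ↦ v|_Γ` extends to a continuous linear operator
`H¹(ℝⁿ) → L²(Γ,μ)`).

Everything is concrete: the `H¹(ℝⁿ)` norm of a Schwartz function is realized, via
Plancherel's theorem, as `‖v‖²_{H¹} = ∫ (‖v‖² + ‖∇v‖²)`; upper `d`-regularity means
`μ(B_r(x)) ≤ c r^d` for all `x ∈ Γ` and `0 < r ≤ 1` (closed balls).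
-/

open MeasureTheory Metric Set
open scoped ENNReal

noncomputable section

abbrev Rn (n : ℕ) : Type := EuclideanSpace ℝ (Fin n)

/-- The squared `H¹(ℝⁿ)` norm `∫ (‖u‖² + ‖∇u‖²)`, which for Schwartz functions agrees
with `∫ (1+|ξ|²)|û(ξ)|² dξ` by Plancherel. -/
def H1normSq {n : ℕ} (u : Rn n → ℂ) : ℝ :=
  ∫ x, (‖u x‖ ^ 2 + ‖fderiv ℝ u x‖ ^ 2)

theorem aux_tonelli {n : ℕ} (ν : Measure (Rn n)) [SFinite ν] {t : ℝ} (ht : 0 < t)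
    (M : ℝ≥0∞) (hM : ∀ z, ν (closedBall z (t / 2)) ≤ M) (g : Rn n → ℝ≥0∞) (hg : Measurable g) :
    ∫⁻ x, (∫⁻ y in closedBall (0 : Rn n) (1 / 2), g (x + t • y)) ∂ν ≤
      ENNReal.ofReal ((t ^ n)⁻¹) * (M * ∫⁻ z, g z) := by
  have hS : MeasurableSet {p : Rn n × Rn n | dist p.1 p.2 ≤ t / 2} :=
    (isClosed_le (continuous_fst.dist continuous_snd) continuous_const).measurableSet
  have hF : Measurable (fun p : Rn n × Rn n =>
      {p : Rn n × Rn n | dist p.1 p.2 ≤ t / 2}.indicator (fun p => g p.2) p) :=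
    (hg.comp measurable_snd).indicator hS
  have h1 : ∀ x, ∫⁻ y in closedBall (0 : Rn n) (1 / 2), g (x + t • y) =
      ENNReal.ofReal ((t ^ n)⁻¹) *
        ∫⁻ z, {p : Rn n × Rn n | dist p.1 p.2 ≤ t / 2}.indicator (fun p => g p.2) (x, z) := by
    intro x
    have hFx : Measurable (fun z => {p : Rn n × Rn n | dist p.1 p.2 ≤ t / 2}.indicator
        (fun p => g p.2) (x, z)) := hF.comp measurable_prodMk_left
    rw [← lintegral_add_left_eq_self (fun z => {p : Rn n × Rn n | dist p.1 p.2 ≤ t / 2}.indicator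
        (fun p => g p.2) (x, z)) x]
    have h2 := Measure.map_addHaar_smul (volume : Measure (Rn n)) ht.ne'
    rw [finrank_euclideanSpace_fin, abs_of_pos (by positivity)] at h2
    rw [← smul_eq_mul, ← lintegral_smul_measure, ← h2, lintegral_map]
    · rw [← lintegral_indicator measurableSet_closedBall]
      congr 1
      ext y
      by_cases hy : ‖y‖ ≤ 1 / 2
      · have : t * ‖y‖ ≤ t / 2 := by nlinarith
        simp [indicator, norm_smul, abs_of_pos ht, this]
        intro h
        exact absurd (by simpa using hy) (not_le.2 h)
      · have : ¬ t * ‖y‖ ≤ t / 2 := by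
          intro h
          exact hy (by nlinarith)
        simp [indicator, norm_smul, abs_of_pos ht, this]
        intro h
        exact absurd (by simpa using h) hy
    · exact hFx.comp (measurable_const_add x)
    · exact measurable_const_smul t
  simp_rw [h1]
  rw [lintegral_const_mul _ hF.lintegral_prod_right', lintegral_lintegral_swap hF.aemeasurable]
  gcongr
  rw [← lintegral_const_mul _ hg]
  refine lintegral_mono fun z => ?_
  have : ∀ x, {p : Rn n × Rn n | dist p.1 p.2 ≤ t / 2}.indicator (fun p => g p.2) (x, z) =
      (closedBall z (t / 2)).indicator (fun _ => g z) x := by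
    intro x
    simp [indicator]
  simp_rw [this]
  rw [lintegral_indicator_const measurableSet_closedBall, mul_comm]
  gcongr
  exact hM z

theorem aux_cs (γ : ℝ) (g : ℝ → ℝ≥0∞) (hg : Measurable g) :
    (∫⁻ t in Ioc (0 : ℝ) 1, g t) ^ 2 ≤
      (∫⁻ t in Ioc (0 : ℝ) 1, ENNReal.ofReal (t ^ (-γ))) *
        ∫⁻ t in Ioc (0 : ℝ) 1, ENNReal.ofReal (t ^ γ) * g t ^ 2 := by
  have h := ENNReal.lintegral_mul_le_Lp_mul_Lq (volume.restrict (Ioc (0 : ℝ) 1))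
    Real.HolderConjugate.two_two
    (f := fun t => ENNReal.ofReal (t ^ (-γ / 2))) (g := fun t => ENNReal.ofReal (t ^ (γ / 2)) * g t)
    (by fun_prop) (by fun_prop)
  have e0 : ∫⁻ t in Ioc (0 : ℝ) 1, ((fun t => ENNReal.ofReal (t ^ (-γ / 2))) *
      (fun t => ENNReal.ofReal (t ^ (γ / 2)) * g t)) t = ∫⁻ t in Ioc (0 : ℝ) 1, g t := by
    refine setLIntegral_congr_fun measurableSet_Ioc fun t ht => ?_
    simp only [Pi.mul_apply]
    rw [← mul_assoc, ← ENNReal.ofReal_mul (Real.rpow_nonneg ht.1.le _), ← Real.rpow_add ht.1]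
    simp [neg_div]
  have e1 : ∫⁻ t in Ioc (0 : ℝ) 1, (ENNReal.ofReal (t ^ (-γ / 2))) ^ (2 : ℝ) =
      ∫⁻ t in Ioc (0 : ℝ) 1, ENNReal.ofReal (t ^ (-γ)) := by
    refine setLIntegral_congr_fun measurableSet_Ioc fun t ht => ?_
    rw [ENNReal.ofReal_rpow_of_nonneg (Real.rpow_nonneg ht.1.le _) (by norm_num),
      ← Real.rpow_mul ht.1.le]
    congr 2; ring
  have e2 : ∫⁻ t in Ioc (0 : ℝ) 1, (ENNReal.ofReal (t ^ (γ / 2)) * g t) ^ (2 : ℝ) =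
      ∫⁻ t in Ioc (0 : ℝ) 1, ENNReal.ofReal (t ^ γ) * g t ^ 2 := by
    refine setLIntegral_congr_fun measurableSet_Ioc fun t ht => ?_
    rw [ENNReal.mul_rpow_of_nonneg _ _ (by norm_num),
      ENNReal.ofReal_rpow_of_nonneg (Real.rpow_nonneg ht.1.le _) (by norm_num),
      ← Real.rpow_mul ht.1.le, ENNReal.rpow_two]
    congr 3; ring
  rw [e0, e1, e2] at h
  calc _ ≤ _ := pow_le_pow_left' h 2
    _ = _ := by
      rw [mul_pow, ← ENNReal.rpow_two, ← ENNReal.rpow_two, ← ENNReal.rpow_mul, ← ENNReal.rpow_mul]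
      norm_num

theorem aux_sq (a b : ℝ≥0∞) : (a + b) ^ 2 ≤ 2 * a ^ 2 + 2 * b ^ 2 := by
  have := ENNReal.rpow_add_le_mul_rpow_add_rpow a b (p := 2) (by norm_num)
  norm_num at this
  rwa [mul_add] at this

theorem aux_pt {n : ℕ} (v : SchwartzMap (Rn n) ℂ) (γ : ℝ) (x y : Rn n) (hy : ‖y‖ ≤ 1) :
    ‖v x‖ₑ ^ 2 ≤ 2 * ‖v (x + y)‖ₑ ^ 2 + 2 * ((∫⁻ t in Ioc (0 : ℝ) 1, ENNReal.ofReal (t ^ (-γ))) *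
        ∫⁻ t in Ioc (0 : ℝ) 1, ENNReal.ofReal (t ^ γ) * ‖fderiv ℝ v (x + t • y)‖ₑ ^ 2) := by
  have hc : Continuous (fderiv ℝ v) := (SchwartzMap.fderivCLM ℝ (Rn n) ℂ v).continuous
  have hct : Continuous fun t : ℝ => fderiv ℝ v (x + t • y) := hc.comp (by fun_prop)
  have hd : ∀ t : ℝ, HasDerivAt (fun t : ℝ => v (x + t • y)) (fderiv ℝ v (x + t • y) y) t := by
    intro t
    have h1 : HasDerivAt (fun t : ℝ => x + t • y) y t := by
      simpa using ((hasDerivAt_id t).smul_const y).const_add x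
    exact (v.differentiableAt.hasFDerivAt (x := x + t • y)).comp_hasDerivAt t h1
  have hi := intervalIntegral.integral_eq_sub_of_hasDerivAt (a := 0) (b := 1)
    (fun t _ => hd t) ((hct.clm_apply continuous_const).intervalIntegrable _ _)
  simp only [one_smul, zero_smul, add_zero] at hi
  have hb : ‖v (x + y) - v x‖ₑ ≤ ∫⁻ t in Ioc (0 : ℝ) 1, ‖fderiv ℝ v (x + t • y)‖ₑ := by
    rw [← hi, intervalIntegral.integral_of_le zero_le_one]
    refine (enorm_integral_le_lintegral_enorm _).trans (lintegral_mono fun t => ?_)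
    rw [← ofReal_norm, ← ofReal_norm]
    refine ENNReal.ofReal_le_ofReal (((fderiv ℝ v (x + t • y)).le_opNorm y).trans ?_)
    exact mul_le_of_le_one_right (norm_nonneg _) hy
  have ht : ‖v x‖ₑ ≤ ‖v (x + y)‖ₑ + ∫⁻ t in Ioc (0 : ℝ) 1, ‖fderiv ℝ v (x + t • y)‖ₑ := by
    calc ‖v x‖ₑ = ‖v (x + y) - (v (x + y) - v x)‖ₑ := by simp
      _ ≤ ‖v (x + y)‖ₑ + ‖v (x + y) - v x‖ₑ := enorm_sub_le
      _ ≤ _ := by gcongr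
  refine (pow_le_pow_left' ht 2).trans ((aux_sq _ _).trans ?_)
  gcongr
  exact aux_cs γ _ hct.enorm.measurable

theorem aux_fin {s : ℝ} (hs : -1 < s) :
    ∫⁻ t in Ioc (0 : ℝ) 1, ENNReal.ofReal (t ^ s) < ∞ := by
  have h := (intervalIntegral.intervalIntegrable_rpow' hs (a := 0) (b := 1))
  rw [intervalIntegrable_iff_integrableOn_Ioc_of_le zero_le_one] at h
  exact h.lintegral_lt_top

theorem aux_main {n : ℕ} (ν : Measure (Rn n)) [SFinite ν] (c d : ℝ) (hc : 0 < c)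
    (hd₁ : (n : ℝ) - 2 < d) (hd₂ : d ≤ n)
    (hν : ∀ z, ∀ t : ℝ, 0 < t → t ≤ 1 → ν (closedBall z (t / 2)) ≤ ENNReal.ofReal (c * t ^ d)) :
    ∃ K : ℝ≥0∞, K ≠ ∞ ∧ ∀ v : SchwartzMap (Rn n) ℂ,
      ∫⁻ x, ‖v x‖ₑ ^ 2 ∂ν ≤ K * ((∫⁻ z, ‖v z‖ₑ ^ 2) + ∫⁻ z, ‖fderiv ℝ v z‖ₑ ^ 2) := by
  set γ : ℝ := (n - d) / 2 with hγ
  set A := ∫⁻ t in Ioc (0 : ℝ) 1, ENNReal.ofReal (t ^ (-γ)) with hA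
  have hAfin : A < ∞ := aux_fin (by rw [hγ]; linarith)
  set V := volume (closedBall (0 : Rn n) (1 / 2)) with hV
  have hV0 : V ≠ 0 := (measure_closedBall_pos _ _ (by norm_num)).ne'
  have hVt : V ≠ ∞ := measure_closedBall_lt_top.ne
  set c' := ENNReal.ofReal c
  refine ⟨V⁻¹ * (2 * c' + 2 * (A * (c' * A))), ?_, fun v => ?_⟩
  · have : c' ≠ ∞ := ENNReal.ofReal_ne_top
    finiteness
  have hc1 : Continuous (fderiv ℝ v) := (SchwartzMap.fderivCLM ℝ (Rn n) ℂ v).continuous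
  have hm1 : Measurable fun z => ‖fderiv ℝ v z‖ₑ ^ 2 := hc1.enorm.measurable.pow_const 2
  have hm0 : Measurable fun z => ‖v z‖ₑ ^ 2 := v.continuous.enorm.measurable.pow_const 2
  set I0 := ∫⁻ z, ‖v z‖ₑ ^ 2
  set I1 := ∫⁻ z, ‖fderiv ℝ v z‖ₑ ^ 2
  have hmt : Measurable fun p : (Rn n × Rn n) × ℝ =>
      ENNReal.ofReal (p.2 ^ γ) * ‖fderiv ℝ v (p.1.1 + p.2 • p.1.2)‖ₑ ^ 2 := by
    have hp : Measurable fun p : (Rn n × Rn n) × ℝ => ENNReal.ofReal (p.2 ^ γ) := by fun_prop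
    refine hp.mul ?_
    exact hm1.comp (g := fun z => ‖fderiv ℝ v z‖ₑ ^ 2)
      (f := fun p : (Rn n × Rn n) × ℝ => p.1.1 + p.2 • p.1.2) (by fun_prop)
  have T0 : ∫⁻ x, (∫⁻ y in closedBall (0 : Rn n) (1 / 2), ‖v (x + y)‖ₑ ^ 2) ∂ν ≤ c' * I0 := by
    have := aux_tonelli ν one_pos c' (fun z => by simpa using hν z 1 one_pos le_rfl) _ hm0
    simpa using this
  have T1 : ∫⁻ x, (∫⁻ y in closedBall (0 : Rn n) (1 / 2), ∫⁻ t in Ioc (0 : ℝ) 1,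
      ENNReal.ofReal (t ^ γ) * ‖fderiv ℝ v (x + t • y)‖ₑ ^ 2) ∂ν ≤ c' * A * I1 := by
    have s1 : ∀ x, ∫⁻ y in closedBall (0 : Rn n) (1 / 2), ∫⁻ t in Ioc (0 : ℝ) 1,
        ENNReal.ofReal (t ^ γ) * ‖fderiv ℝ v (x + t • y)‖ₑ ^ 2 =
        ∫⁻ t in Ioc (0 : ℝ) 1, ∫⁻ y in closedBall (0 : Rn n) (1 / 2),
        ENNReal.ofReal (t ^ γ) * ‖fderiv ℝ v (x + t • y)‖ₑ ^ 2 := by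
      intro x
      refine lintegral_lintegral_swap (Measurable.aemeasurable ?_)
      exact hmt.comp (g := fun p => _) (f := fun p : Rn n × ℝ => ((x, p.1), p.2)) (by fun_prop)
    simp_rw [s1]
    rw [lintegral_lintegral_swap]
    swap
    · refine Measurable.aemeasurable ?_
      refine Measurable.lintegral_prod_right' (f := fun q : (Rn n × ℝ) × Rn n =>
        ENNReal.ofReal (q.1.2 ^ γ) * ‖fderiv ℝ v (q.1.1 + q.1.2 • q.2)‖ₑ ^ 2) ?_
      exact hmt.comp (g := fun p => _)
        (f := fun q : (Rn n × ℝ) × Rn n => ((q.1.1, q.2), q.1.2)) (by fun_prop)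
    have s2 : ∀ t ∈ Ioc (0 : ℝ) 1, ∫⁻ x, (∫⁻ y in closedBall (0 : Rn n) (1 / 2),
        ENNReal.ofReal (t ^ γ) * ‖fderiv ℝ v (x + t • y)‖ₑ ^ 2) ∂ν ≤
        ENNReal.ofReal (t ^ (-γ)) * (c' * I1) := by
      intro t ht
      have mm : Measurable fun p : Rn n × Rn n => ‖fderiv ℝ v (p.1 + t • p.2)‖ₑ ^ 2 :=
        hm1.comp (by fun_prop)
      have m1 : ∀ x, Measurable fun y => ‖fderiv ℝ v (x + t • y)‖ₑ ^ 2 :=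
        fun x => hm1.comp (by fun_prop)
      simp_rw [fun x => lintegral_const_mul (μ := volume.restrict (closedBall (0 : Rn n) (1 / 2)))
        (ENNReal.ofReal (t ^ γ)) (m1 x)]
      rw [lintegral_const_mul _ mm.lintegral_prod_right']
      refine (mul_le_mul_right (aux_tonelli ν ht.1 _
        (fun z => hν z t ht.1 ht.2) _ hm1) _).trans (le_of_eq ?_)
      rw [mul_comm c, ENNReal.ofReal_mul (Real.rpow_nonneg ht.1.le _)]
      have e : t ^ γ * ((t ^ n)⁻¹ * t ^ d) = t ^ (-γ) := by
        rw [← Real.rpow_natCast, ← Real.rpow_neg ht.1.le, ← Real.rpow_add ht.1,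
          ← Real.rpow_add ht.1]
        congr 1
        rw [hγ]; ring
      have ht0 := ht.1
      rw [← e, ENNReal.ofReal_mul (by positivity), ENNReal.ofReal_mul (by positivity)]
      ring
    refine (setLIntegral_mono' measurableSet_Ioc s2).trans (le_of_eq ?_)
    rw [lintegral_mul_const _ (by fun_prop), ← hA]
    ring
  have key : V * ∫⁻ x, ‖v x‖ₑ ^ 2 ∂ν ≤ (2 * c' + 2 * (A * (c' * A))) * (I0 + I1) := by
    have hx : ∀ x, V * ‖v x‖ₑ ^ 2 ≤
        2 * (∫⁻ y in closedBall (0 : Rn n) (1 / 2), ‖v (x + y)‖ₑ ^ 2) +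
        2 * (A * ∫⁻ y in closedBall (0 : Rn n) (1 / 2), ∫⁻ t in Ioc (0 : ℝ) 1,
          ENNReal.ofReal (t ^ γ) * ‖fderiv ℝ v (x + t • y)‖ₑ ^ 2) := by
      intro x
      have q0 : Measurable fun y => ‖v (x + y)‖ₑ ^ 2 := hm0.comp (by fun_prop)
      have q1 : Measurable fun y => ∫⁻ t in Ioc (0 : ℝ) 1,
          ENNReal.ofReal (t ^ γ) * ‖fderiv ℝ v (x + t • y)‖ₑ ^ 2 := by
        refine Measurable.lintegral_prod_right' (f := fun q : Rn n × ℝ =>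
          ENNReal.ofReal (q.2 ^ γ) * ‖fderiv ℝ v (x + q.2 • q.1)‖ₑ ^ 2) ?_
        exact hmt.comp (g := fun p => _) (f := fun p : Rn n × ℝ => ((x, p.1), p.2)) (by fun_prop)
      rw [← lintegral_const_mul _ q0, ← lintegral_const_mul _ q1,
        ← lintegral_const_mul _ (q1.const_mul _), ← lintegral_add_left (q0.const_mul _),
        mul_comm, hV, ← setLIntegral_const]
      refine setLIntegral_mono' measurableSet_closedBall fun y hy => ?_
      refine aux_pt v γ x y ?_
      have : ‖y‖ ≤ 1 / 2 := by simpa using hy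
      linarith
    have q0 : Measurable fun x => ∫⁻ y in closedBall (0 : Rn n) (1 / 2), ‖v (x + y)‖ₑ ^ 2 := by
      refine Measurable.lintegral_prod_right' (f := fun q : Rn n × Rn n => ‖v (q.1 + q.2)‖ₑ ^ 2) ?_
      exact hm0.comp (by fun_prop)
    have q1 : Measurable fun x => ∫⁻ y in closedBall (0 : Rn n) (1 / 2), ∫⁻ t in Ioc (0 : ℝ) 1,
          ENNReal.ofReal (t ^ γ) * ‖fderiv ℝ v (x + t • y)‖ₑ ^ 2 :=
      (hmt.lintegral_prod_right' (ν := volume.restrict (Ioc (0 : ℝ) 1))).lintegral_prod_right'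
    rw [← lintegral_const_mul _ hm0]
    refine (lintegral_mono hx).trans ?_
    rw [lintegral_add_left (q0.const_mul _), lintegral_const_mul _ q0,
      lintegral_const_mul _ (q1.const_mul _), lintegral_const_mul _ q1]
    calc _ ≤ 2 * (c' * I0) + 2 * (A * (c' * A * I1)) := by gcongr
      _ = (2 * c') * I0 + (2 * (A * (c' * A))) * I1 := by ring
      _ ≤ (2 * c' + 2 * (A * (c' * A))) * I0 + (2 * c' + 2 * (A * (c' * A))) * I1 := by
        gcongr
        · exact le_self_add
        · exact le_add_self
      _ = _ := by ring
  calc _ = V⁻¹ * (V * ∫⁻ x, ‖v x‖ₑ ^ 2 ∂ν) := by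
        rw [← mul_assoc, ENNReal.inv_mul_cancel hV0 hVt, one_mul]
    _ ≤ V⁻¹ * ((2 * c' + 2 * (A * (c' * A))) * (I0 + I1)) := by gcongr
    _ = _ := by ring

theorem statement8
    {n : ℕ} (hn : 2 ≤ n)
    -- μ is a Radon measure (regular Borel, finite on compacts)
    (μ : Measure (Rn n)) [μ.Regular] [IsFiniteMeasureOnCompacts μ]
    -- whose support is the compact set Γ
    (Γ : Set (Rn n)) (hΓcompact : IsCompact Γ)
    (hΓsupp : Γ = {x | ∀ r > 0, 0 < μ (ball x r)}) (hΓnull : μ Γᶜ = 0)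
    -- μ is upper d-regular on Γ for some d ∈ (n-2, n]
    (d : ℝ) (hd₁ : (n : ℝ) - 2 < d) (hd₂ : d ≤ n)
    (c : ℝ) (hc : 0 < c)
    (hreg : ∀ x ∈ Γ, ∀ r : ℝ, 0 < r → r ≤ 1 →
      μ (closedBall x r) ≤ ENNReal.ofReal (c * r ^ d)) :
    -- Conclusion: the trace-continuity inequality holds for all Schwartz functions.
    ∃ C : ℝ, 0 < C ∧ ∀ v : SchwartzMap (Rn n) ℂ,
      Real.sqrt (∫ x in Γ, ‖v x‖ ^ 2 ∂μ) ≤ C * Real.sqrt (H1normSq (⇑v)) := by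
  have hν : ∀ z, ∀ t : ℝ, 0 < t → t ≤ 1 →
      (μ.restrict Γ) (closedBall z (t / 2)) ≤ ENNReal.ofReal (c * t ^ d) := by
    intro z t ht0 ht1
    rw [Measure.restrict_apply measurableSet_closedBall]
    by_cases h : (closedBall z (t / 2) ∩ Γ).Nonempty
    · obtain ⟨x, hx1, hx2⟩ := h
      refine (measure_mono ?_).trans (hreg x hx2 t ht0 ht1)
      intro w hw
      have h1 : dist x z ≤ t / 2 := hx1
      have h2 : dist w z ≤ t / 2 := hw.1
      have h3 := dist_triangle_right w x z
      rw [mem_closedBall]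
      linarith
    · rw [not_nonempty_iff_eq_empty.1 h]
      simp
  obtain ⟨K, hK, hKv⟩ := aux_main (μ.restrict Γ) c d hc hd₁ hd₂ hν
  refine ⟨Real.sqrt (K.toReal + 1), by positivity, fun v => ?_⟩
  rw [← Real.sqrt_mul (by positivity)]
  refine Real.sqrt_le_sqrt ?_
  have hc1 : Continuous (fderiv ℝ v) := (SchwartzMap.fderivCLM ℝ (Rn n) ℂ v).continuous
  have hm0 : Measurable fun z => ‖v z‖ₑ ^ 2 := v.continuous.enorm.measurable.pow_const 2
  have i0 : Integrable fun z => ‖v z‖ ^ 2 :=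
    (memLp_two_iff_integrable_sq_norm v.continuous.aestronglyMeasurable).1 (v.memLp 2)
  have i1 : Integrable fun z => ‖fderiv ℝ v z‖ ^ 2 :=
    (memLp_two_iff_integrable_sq_norm hc1.aestronglyMeasurable).1
      ((SchwartzMap.fderivCLM ℝ (Rn n) ℂ v).memLp 2 volume)
  have hH : ENNReal.ofReal (H1normSq v) =
      (∫⁻ z, ‖v z‖ₑ ^ 2) + ∫⁻ z, ‖fderiv ℝ v z‖ₑ ^ 2 := by
    have i2 : Integrable fun z => ‖v z‖ ^ 2 + ‖fderiv ℝ v z‖ ^ 2 := i0.add i1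
    rw [H1normSq, ofReal_integral_eq_lintegral_ofReal i2
      (Filter.Eventually.of_forall fun x => by positivity), ← lintegral_add_left hm0]
    refine lintegral_congr fun x => ?_
    rw [ENNReal.ofReal_add (by positivity) (by positivity), ENNReal.ofReal_pow (norm_nonneg _),
      ENNReal.ofReal_pow (norm_nonneg _), ofReal_norm, ofReal_norm]
  have hH0 : 0 ≤ H1normSq v := integral_nonneg fun x => by positivity
  have hL := hKv v
  rw [← hH] at hL
  rw [integral_eq_lintegral_of_nonneg_ae (f := fun x => ‖v x‖ ^ 2) (Filter.Eventually.of_forall fun x => by positivity)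
    (v.continuous.norm.pow 2).aestronglyMeasurable]
  have he : ∫⁻ x in Γ, ENNReal.ofReal (‖v x‖ ^ 2) ∂μ = ∫⁻ x in Γ, ‖v x‖ₑ ^ 2 ∂μ :=
    lintegral_congr fun x => by rw [ENNReal.ofReal_pow (norm_nonneg _), ofReal_norm]
  rw [he]
  refine (ENNReal.toReal_mono (ENNReal.mul_ne_top hK ENNReal.ofReal_ne_top) hL).trans ?_
  rw [ENNReal.toReal_mul, ENNReal.toReal_ofReal hH0]
  nlinarith
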